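/- Every weakly triangulated graph is either a clique or admits a 2-pair, i.e., a pair of non-adjacent vertices a, b such that every induced path from a to b has length exactly 2. -/

import Mathlib

/-!
The proof is by induction on the number of vertices, inside a fixed ambient graph `G`: every
finite vertex set `S` that is not a clique contains a pair that is a 2-pair of `G[S]`.

If `G[S]` has no induced path of length two, then any non-adjacent pair of `S` works vacuously.
Otherwise the middle vertex of such a path is a one-vertex set `T ⊆ S` that is anticonnected
(connected in `Gᶜ`) and whose set `C(T)` of common neighbours in `S` is not a clique. Take `T`
maximal with these properties. Since `C(T)` misses `T`, it is smaller than `S`, and the induction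
hypothesis gives a 2-pair `a, b` of `G[C(T)]`; this is a 2-pair of `G[S]` too. Indeed, let `P` be
an induced path of `G[S]` from `a` to `b` of length `≠ 2`. It leaves `C(T)`, so it has a subpath
`Q` whose ends are in `C(T)` and whose interior is nonempty and misses `C(T)`.

* If `Q` has length two with middle vertex `v`, then `T ∪ {v}` contradicts the maximality of `T`.
* If `Q` has length at least three, `no_long_segment` produces a long hole or a long antihole: no
  `t ∈ T` misses two consecutive vertices of `Q` (this would give a long hole), so a shortest path
  of `Gᶜ` through `T` between the two consecutive interior vertices `q₁, q₂` has length at least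
  three, and it is closed to a long antihole by the last vertex of `Q`, or by both ends if `Q` has
  length exactly three.
-/

open SimpleGraph

/-- A graph is weakly triangulated if it contains no induced cycle of length ≥ 5
(long hole) and no complement of such a cycle (long antihole) as an induced subgraph. -/
def SimpleGraph.IsWeaklyTriangulated {V : Type*} (G : SimpleGraph V) : Prop :=
  ∀ n : ℕ, 5 ≤ n → IsEmpty (cycleGraph n ↪g G) ∧ IsEmpty ((cycleGraph n)ᶜ ↪g G)

namespace TwoPair

variable {V : Type*}

/-! ### Induced paths and long holes -/

/-- `f 0, …, f n` is an induced path of `G` with `n` edges; the values of `f` beyond `n` are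
irrelevant. -/
def IndPath (G : SimpleGraph V) (f : ℕ → V) (n : ℕ) : Prop :=
  ∀ i j, i ≤ n → j ≤ n → (f i = f j → i = j) ∧ (G.Adj (f i) (f j) ↔ i + 1 = j ∨ j + 1 = i)

lemma IndPath.sub {G : SimpleGraph V} {f : ℕ → V} {n : ℕ} (h : IndPath G f n) (a m : ℕ)
    (ham : a + m ≤ n) : IndPath G (fun i => f (a + i)) m := by
  intro i j hi hj
  obtain ⟨h1, h2⟩ := h (a + i) (a + j) (by omega) (by omega)
  refine ⟨fun e => by have := h1 e; omega, h2.trans (by omega)⟩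

lemma IndPath.cons {G : SimpleGraph V} {f : ℕ → V} {n : ℕ} (h : IndPath G f n) (v : V)
    (hne : ∀ i ≤ n, v ≠ f i) (hadj : ∀ i ≤ n, (G.Adj v (f i) ↔ i = 0)) :
    IndPath G (fun i => if i = 0 then v else f (i - 1)) (n + 1) := by
  intro i j hi hj
  rcases i with _ | i <;> rcases j with _ | j
  · simp
  · have h1 := hne j (by omega)
    have h2 := hadj j (by omega)
    simp [h1, h2, eq_comm]
  · have h1 := hne i (by omega)
    have h2 := hadj i (by omega)
    simp [h1.symm, G.adj_comm, h2, eq_comm]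
  · obtain ⟨h1, h2⟩ := h i j (by omega) (by omega)
    simp only [Nat.add_eq_zero_iff, one_ne_zero, and_false, if_false, Nat.add_sub_cancel, h2]
    exact ⟨fun e => by rw [h1 e], by omega⟩

/-- An induced path of length at least three, together with a vertex adjacent to its two ends
and to no other vertex of it, is a long hole. -/
lemma no_hole {H : SimpleGraph V} (hH : ∀ n, 5 ≤ n → IsEmpty (cycleGraph n ↪g H))
    {f : ℕ → V} {n : ℕ} (hf : IndPath H f n) (hn : 3 ≤ n) (t : V)
    (ht : ∀ i ≤ n, (H.Adj t (f i) ↔ i = 0 ∨ i = n)) : False := by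
  have hne : ∀ i ≤ n, t ≠ f i := by
    rintro i hi rfl
    have h0 := ht 0 (by omega)
    have h1 := ht n le_rfl
    rw [(hf i 0 hi (by omega)).2] at h0
    rw [(hf i n hi le_rfl).2] at h1
    omega
  refine (hH (n + 2) (by omega)).false
    ⟨⟨fun i => if i.val ≤ n then f i.val else t, ?_⟩, ?_⟩
  · intro i j hij
    have hi := i.isLt
    have hj := j.isLt
    apply Fin.ext
    by_cases h1 : i.val ≤ n <;> by_cases h2 : j.val ≤ n <;> simp only [h1, h2, if_true, if_false] at hij
    · exact (hf _ _ h1 h2).1 hij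
    · exact absurd hij.symm (hne _ h1)
    · exact absurd hij (hne _ h2)
    · omega
  · intro i j
    have hi := i.isLt
    have hj := j.isLt
    -- adjacency in the cycle, in terms of the underlying natural numbers
    have key : (cycleGraph (n + 2)).Adj i j ↔
        (i.val + 1 = j.val ∨ j.val + 1 = i.val ∨ (i.val = 0 ∧ j.val = n + 1) ∨
          (j.val = 0 ∧ i.val = n + 1)) := by
      have hsub : ∀ a b : Fin (n + 2), (a - b).val = 1 ↔
          (b.val + 1 = a.val ∨ (a.val = 0 ∧ b.val = n + 1)) := by
        intro a b
        have ha := a.isLt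
        have hb := b.isLt
        rcases le_or_gt b a with h | h
        · rw [Fin.coe_sub_iff_le.mpr h]
          have : b.val ≤ a.val := h
          omega
        · rw [Fin.coe_sub_iff_lt.mpr h]
          have : a.val < b.val := h
          omega
      rw [cycleGraph_adj', hsub, hsub]
      omega
    rw [key]
    show H.Adj (if i.val ≤ n then f i.val else t) (if j.val ≤ n then f j.val else t) ↔ _
    by_cases h1 : i.val ≤ n <;> by_cases h2 : j.val ≤ n <;> simp only [h1, h2, if_true, if_false]
    · rw [(hf _ _ h1 h2).2]; omega
    · rw [H.adj_comm, ht _ h1]; omega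
    · rw [ht _ h2]; omega
    · simp only [SimpleGraph.irrefl, false_iff]; omega

/-- A shortest walk inside `S` is an induced path. -/
lemma exists_indPath {H : SimpleGraph V} {S : Set V} (hS : (H.induce S).Preconnected)
    {a b : V} (ha : a ∈ S) (hb : b ∈ S) :
    ∃ f n, IndPath H f n ∧ f 0 = a ∧ f n = b ∧ ∀ i, f i ∈ S := by
  have hconn : (H.induce S).Connected := by
    have : Nonempty S := ⟨⟨a, ha⟩⟩
    exact ⟨hS⟩
  obtain ⟨p, hp⟩ := hconn.exists_walk_length_eq_dist ⟨a, ha⟩ ⟨b, hb⟩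
  have hd : ∀ i ≤ p.length, (H.induce S).dist ⟨a, ha⟩ (p.getVert i) = i := by
    intro i hi
    have h1 := SimpleGraph.dist_le (p.take i)
    have h2 := SimpleGraph.dist_le (p.drop i)
    have h3 := hconn.dist_triangle (u := ⟨a, ha⟩) (v := p.getVert i) (w := ⟨b, hb⟩)
    simp only [Walk.take_length, Walk.drop_length] at h1 h2
    omega
  refine ⟨fun i => (p.getVert i).1, p.length, ?_, by simp, by simp, fun i => (p.getVert i).2⟩
  intro i j hi hj
  have hi' := hd i hi
  have hj' := hd j hj
  refine ⟨fun e => ?_, fun e => ?_, fun e => ?_⟩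
  · rw [Subtype.ext e] at hi'
    omega
  · have hadj : (H.induce S).Adj (p.getVert i) (p.getVert j) := e
    have h1 := hconn.dist_triangle (u := ⟨a, ha⟩) (v := p.getVert i) (w := p.getVert j)
    have h2 := hconn.dist_triangle (u := ⟨a, ha⟩) (v := p.getVert j) (w := p.getVert i)
    rw [dist_eq_one_iff_adj.mpr hadj] at h1
    rw [dist_eq_one_iff_adj.mpr hadj.symm] at h2
    have h3 : i ≠ j := by
      rintro rfl
      exact hadj.ne rfl
    omega
  · rcases e with rfl | rfl
    · exact p.adj_getVert_succ (by omega)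
    · exact (p.adj_getVert_succ (i := j) (by omega)).symm

/-- Used in `Gᶜ`: an anticonnected set stays anticonnected when a vertex with a non-neighbour in it
is added. -/
lemma preconnected_insert {H : SimpleGraph V} {T : Set V} (hT : (H.induce T).Preconnected)
    {v t : V} (ht : t ∈ T) (hvt : H.Adj v t) : (H.induce (insert v T)).Preconnected := by
  have h := (induce_union_connected (induce_pair_connected_of_adj hvt).preconnected hT
    ⟨t, by simp [ht]⟩).preconnected
  have e : ({v, t} ∪ T : Set V) = insert v T := by
    ext x; simp only [Set.mem_union, Set.mem_insert_iff, Set.mem_singleton_iff]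
    constructor
    · rintro ((h | rfl) | h) <;> tauto
    · tauto
  rwa [e] at h

/-! ### Paths attached to an anticonnected set -/

/-- If the ends of an induced path of length at least three are adjacent to all of an
anticonnected set `T`, then some interior vertex is too. -/
lemma no_long_segment {G : SimpleGraph V} (hwt : G.IsWeaklyTriangulated) {T : Set V}
    (hT : (Gᶜ.induce T).Preconnected) {f : ℕ → V} {k : ℕ} (hf : IndPath G f k) (hk : 3 ≤ k)
    (h0 : ∀ t ∈ T, G.Adj t (f 0)) (hlast : ∀ t ∈ T, G.Adj t (f k))
    (hinner : ∀ i, 0 < i → i < k → ∃ t ∈ T, ¬ G.Adj t (f i)) (hfT : ∀ i ≤ k, f i ∉ T) : False := by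
  have hG : ∀ n, 5 ≤ n → IsEmpty (cycleGraph n ↪g G) := fun n hn => (hwt n hn).1
  have hGc : ∀ n, 5 ≤ n → IsEmpty (cycleGraph n ↪g Gᶜ) := fun n hn =>
    ⟨fun e => (hwt n hn).2.false (Embedding.complEquiv.symm ((compl_compl (cycleGraph n)).symm ▸ e))⟩
  -- a vertex missing both `f 1` and `f 2` closes a long hole at its first later neighbour
  have h12 : ∀ t ∈ T, G.Adj t (f 1) ∨ G.Adj t (f 2) := by
    intro t ht
    by_contra! hcon
    classical
    have hex : ∃ j, 0 < j ∧ G.Adj t (f j) := ⟨k, by omega, hlast t ht⟩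
    obtain ⟨hj0, hj⟩ := Nat.find_spec hex
    have hmin : ∀ i, 0 < i → i < Nat.find hex → ¬ G.Adj t (f i) :=
      fun i hi hlt hadj => Nat.find_min hex hlt ⟨hi, hadj⟩
    have hjk : Nat.find hex ≤ k := Nat.find_min' hex ⟨by omega, hlast t ht⟩
    generalize Nat.find hex = j at *
    have hj3 : 3 ≤ j := by
      by_contra hlt
      have : j = 1 ∨ j = 2 := by omega
      rcases this with rfl | rfl
      · exact hcon.1 hj
      · exact hcon.2 hj
    have hs := hf.sub 0 j (by omega)
    simp only [Nat.zero_add] at hs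
    refine no_hole hG hs hj3 t fun i hi => ⟨fun hadj => ?_, ?_⟩
    · by_contra hne
      exact hmin i (by omega) (by omega) hadj
    · rintro (rfl | rfl)
      · exact h0 t ht
      · exact hj
  obtain ⟨t1, ht1, hn1⟩ := hinner 1 (by omega) (by omega)
  obtain ⟨t2, ht2, hn2⟩ := hinner 2 (by omega) (by omega)
  have hne1 : f 1 ≠ t1 := fun e => hfT 1 (by omega) (e ▸ ht1)
  have hne2 : f 2 ≠ t2 := fun e => hfT 2 (by omega) (e ▸ ht2)
  have hU : (Gᶜ.induce (insert (f 1) (insert (f 2) T))).Preconnected := by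
    refine preconnected_insert (preconnected_insert hT ht2 ?_) (Set.mem_insert_of_mem _ ht1) ?_
    · exact ⟨hne2, fun h => hn2 h.symm⟩
    · exact ⟨hne1, fun h => hn1 h.symm⟩
  obtain ⟨g, n, hg, hg0, hgn, hgU⟩ := exists_indPath hU (a := f 1) (b := f 2) (by simp) (by simp)
  have hadj12 : G.Adj (f 1) (f 2) := (hf 1 2 (by omega) (by omega)).2.mpr (by omega)
  have hgT : ∀ i, 0 < i → i < n → g i ∈ T := by
    intro i hi hin
    rcases hgU i with h | h | h
    · have := (hg i 0 (by omega) (by omega)).1 (h.trans hg0.symm)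
      omega
    · have := (hg i n (by omega) (by omega)).1 (h.trans hgn.symm)
      omega
    · exact h
  have hn3 : 3 ≤ n := by
    by_contra hlt
    have : n = 0 ∨ n = 1 ∨ n = 2 := by omega
    rcases this with rfl | rfl | rfl
    · exact hadj12.ne (hg0.symm.trans hgn)
    · have := (hg 0 1 (by omega) (by omega)).2.mpr (by omega)
      rw [hg0, hgn] at this
      exact this.2 hadj12
    · have h01 := (hg 1 0 (by omega) (by omega)).2.mpr (by omega)
      have h02 := (hg 1 2 (by omega) (by omega)).2.mpr (by omega)
      rw [hg0] at h01
      rw [hgn] at h02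
      exact (h12 _ (hgT 1 (by omega) (by omega))).elim h01.2 h02.2
  -- how the two ends of the path see the antipath
  have hendT : ∀ e, (∀ t ∈ T, G.Adj t e) → ∀ i, 0 < i → i < n → ¬ Gᶜ.Adj e (g i) :=
    fun e he i hi hin h => h.2 (he _ (hgT i hi hin)).symm
  have hcompl : ∀ i j, i ≤ k → j ≤ k → (Gᶜ.Adj (f i) (f j) ↔ (i ≠ j ∧ i + 1 ≠ j ∧ j + 1 ≠ i)) := by
    intro i j hi hj
    rw [compl_adj, (hf i j hi hj).2]
    have : f i ≠ f j ↔ i ≠ j :=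
      not_congr ⟨(hf i j hi hj).1, fun e => by rw [e]⟩
    rw [this]
    omega
  rcases Nat.lt_or_ge 3 k with hk4 | hk3
  · refine no_hole hGc hg hn3 (f k) fun i hi => ?_
    rcases Nat.eq_zero_or_pos i with rfl | hipos
    · rw [hg0, hcompl k 1 le_rfl (by omega)]; omega
    · rcases Nat.lt_or_ge i n with hin | hin
      · have := hendT (f k) hlast i hipos hin
        simp only [this, false_iff]; omega
      · obtain rfl : i = n := by omega
        rw [hgn, hcompl k 2 le_rfl (by omega)]; omega
  · obtain rfl : k = 3 := by omega
    have hc := hg.cons (f 3) (fun i hi e => ?_) (fun i hi => ?_)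
    · refine no_hole hGc hc (by omega) (f 0) fun i hi => ?_
      rcases i with _ | i
      · simp [hcompl 0 3]
      simp only [Nat.add_eq_zero_iff, one_ne_zero, and_false, if_false, Nat.add_sub_cancel, false_or]
      rcases Nat.eq_zero_or_pos i with rfl | hipos
      · rw [hg0, hcompl 0 1 (by omega) (by omega)]; omega
      · rcases Nat.lt_or_ge i n with hin | hin
        · have := hendT (f 0) h0 i hipos hin
          simp only [this, false_iff]; omega
        · obtain rfl : i = n := by omega
          rw [hgn, hcompl 0 2 (by omega) (by omega)]; omega
    · rcases Nat.eq_zero_or_pos i with rfl | hipos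
      · have := (hf 3 1 (by omega) (by omega)).1 (e.trans hg0)
        omega
      · rcases Nat.lt_or_ge i n with hin | hin
        · exact hfT 3 le_rfl (e ▸ hgT i hipos hin)
        · obtain rfl : i = n := by omega
          have := (hf 3 2 (by omega) (by omega)).1 (e.trans hgn)
          omega
    · rcases Nat.eq_zero_or_pos i with rfl | hipos
      · rw [hg0, hcompl 3 1 (by omega) (by omega)]; omega
      · rcases Nat.lt_or_ge i n with hin | hin
        · have := hendT (f 3) hlast i hipos hin
          simp only [this, false_iff]; omega
        · obtain rfl : i = n := by omega
          rw [hgn, hcompl 3 2 (by omega) (by omega)]; omega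

/-- A path that starts and ends in `C` but is not contained in `C` has a subpath of length at
least two that meets `C` exactly in its two ends. -/
lemma exists_segment (C : Set V) (f : ℕ → V) (n : ℕ) (h0 : f 0 ∈ C) (hn : f n ∈ C)
    {i : ℕ} (hin : i ≤ n) (hi : f i ∉ C) :
    ∃ a m, 2 ≤ m ∧ a + m ≤ n ∧ f a ∈ C ∧ f (a + m) ∈ C ∧
      ∀ j, 0 < j → j < m → f (a + j) ∉ C := by
  classical
  have hex : ∃ j, i < j ∧ f j ∈ C := by
    refine ⟨n, lt_of_le_of_ne hin ?_, hn⟩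
    rintro rfl
    exact hi hn
  have hex' : ∃ d, d ≤ i ∧ f (i - d) ∈ C := ⟨i, le_rfl, by simpa using h0⟩
  obtain ⟨hb1, hb2⟩ := Nat.find_spec hex
  obtain ⟨hd1, hd2⟩ := Nat.find_spec hex'
  have hbn : Nat.find hex ≤ n := by
    refine Nat.find_min' hex ⟨lt_of_le_of_ne hin ?_, hn⟩
    rintro rfl
    exact hi hn
  have hbmin : ∀ j, i < j → j < Nat.find hex → f j ∉ C :=
    fun j h1 h2 h3 => Nat.find_min hex h2 ⟨h1, h3⟩
  have hdmin : ∀ d, d < Nat.find hex' → f (i - d) ∉ C :=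
    fun d h1 h3 => Nat.find_min hex' h1 ⟨by omega, h3⟩
  generalize Nat.find hex = b at *
  generalize Nat.find hex' = d at *
  have hd0 : d ≠ 0 := by
    rintro rfl
    exact hi hd2
  refine ⟨i - d, b - (i - d), by omega, by omega, hd2, ?_, fun j hj0 hj => ?_⟩
  · rwa [show i - d + (b - (i - d)) = b by omega]
  · rcases le_or_gt (i - d + j) i with h | h
    · have := hdmin (d - j) (by omega)
      rwa [show i - (d - j) = i - d + j by omega] at this
    · exact hbmin _ h (by omega)

/-! ### The induction -/

/-- The relative version of the theorem, in which a 2-pair of `G[S]` is described by the induced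
paths of `G` that stay inside `S`; this spares passing to subgraphs in the induction. -/
lemma exists_two_pair [Finite V] {G : SimpleGraph V} (hwt : G.IsWeaklyTriangulated) :
    ∀ (N : ℕ) (S : Set V), S.ncard = N → (∃ a ∈ S, ∃ b ∈ S, a ≠ b ∧ ¬ G.Adj a b) →
      ∃ a ∈ S, ∃ b ∈ S, a ≠ b ∧ ¬ G.Adj a b ∧
        ∀ f n, IndPath G f n → f 0 = a → f n = b → (∀ i ≤ n, f i ∈ S) → n = 2 := by
  intro N
  induction N using Nat.strong_induction_on with
  | _ N ih =>
  rintro S hSN ⟨a₀, ha₀, b₀, hb₀, hab₀, hnadj₀⟩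
  -- the admissible anticonnected sets
  let F : Set (Set V) := {T | T ⊆ S ∧ T.Nonempty ∧ (Gᶜ.induce T).Preconnected ∧
    ∃ a ∈ S, ∃ b ∈ S, a ≠ b ∧ ¬ G.Adj a b ∧ (∀ t ∈ T, G.Adj t a) ∧ (∀ t ∈ T, G.Adj t b)}
  by_cases hF : F.Nonempty
  · obtain ⟨T, hTF, hTmax⟩ := (Set.toFinite F).exists_maximal hF
    obtain ⟨hTS, ⟨t₀, ht₀⟩, hTc, a₁, ha₁, b₁, hb₁, hab₁, hnadj₁, hTa₁, hTb₁⟩ := hTF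
    let C : Set V := {s | s ∈ S ∧ ∀ t ∈ T, G.Adj t s}
    have hCS : C ⊆ S := fun s hs => hs.1
    have hCT : ∀ s ∈ C, s ∉ T := fun s hs hsT => (hs.2 s hsT).ne rfl
    have hlt : C.ncard < N := by
      rw [← hSN]
      refine Set.ncard_lt_ncard (Set.ssubset_iff_subset_ne.mpr ⟨hCS, fun e => ?_⟩) (Set.toFinite S)
      exact hCT t₀ (e ▸ hTS ht₀) ht₀
    obtain ⟨a, ha, b, hb, hab, hnadj, hpath⟩ :=
      ih _ hlt C rfl ⟨a₁, ⟨ha₁, hTa₁⟩, b₁, ⟨hb₁, hTb₁⟩, hab₁, hnadj₁⟩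
    refine ⟨a, hCS ha, b, hCS hb, hab, hnadj, fun f n hf hf0 hfn hfS => ?_⟩
    by_contra hn2
    have hfC : ∃ i ≤ n, f i ∉ C := by
      by_contra! hall
      exact hn2 (hpath f n hf hf0 hfn hall)
    -- a vertex of `T` on the path would be adjacent to both ends, forcing length two
    have hfT : ∀ i ≤ n, f i ∉ T := by
      intro i hi hiT
      have h1 := ha.2 _ hiT
      have h2 := hb.2 _ hiT
      rw [← hf0, (hf i 0 hi (by omega)).2] at h1
      rw [← hfn, (hf i n hi le_rfl).2] at h2
      have h3 : n ≠ 0 := by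
        rintro rfl
        exact hab (hf0.symm.trans hfn)
      omega
    obtain ⟨i, hin, hi⟩ := hfC
    obtain ⟨c, m, hm2, hcm, hc, hcm', hseg⟩ :=
      exists_segment C f n (hf0 ▸ ha) (hfn ▸ hb) hin hi
    have hmiss : ∀ j, 0 < j → j < m → ∃ t ∈ T, ¬ G.Adj t (f (c + j)) := by
      intro j hj hjm
      by_contra! hall
      exact hseg j hj hjm ⟨hfS _ (by omega), hall⟩
    rcases Nat.lt_or_ge 2 m with hm3 | hm
    · exact no_long_segment hwt hTc (hf.sub c m hcm) hm3 hc.2 hcm'.2 hmiss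
        (fun j hj => hfT _ (by omega))
    · obtain rfl : m = 2 := by omega
      obtain ⟨t, ht, htn⟩ := hmiss 1 (by omega) (by omega)
      have hvT := hfT (c + 1) (by omega)
      have hne : f (c + 1) ≠ t := fun e => hvT (e ▸ ht)
      refine hvT (hTmax (y := insert (f (c + 1)) T) ⟨?_, ⟨t, by simp [ht]⟩, ?_, f c, hc.1, f (c + 2),
        hcm'.1, fun e => ?_, fun e => ?_, ?_, ?_⟩ (Set.subset_insert _ _) (Set.mem_insert _ _))
      · exact Set.insert_subset (hfS _ (by omega)) hTS
      · exact preconnected_insert hTc ht ⟨hne, fun h => htn h.symm⟩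
      · have := (hf c (c + 2) (by omega) (by omega)).1 e
        omega
      · have := (hf c (c + 2) (by omega) (by omega)).2.mp e
        omega
      · rintro s (rfl | hs)
        · exact (hf _ _ (by omega) (by omega)).2.mpr (by omega)
        · exact hc.2 s hs
      · rintro s (rfl | hs)
        · exact (hf _ _ (by omega) (by omega)).2.mpr (by omega)
        · exact hcm'.2 s hs
  · refine ⟨a₀, ha₀, b₀, hb₀, hab₀, hnadj₀, fun f n hf hf0 hfn hfS => ?_⟩
    have hn0 : n ≠ 0 := by
      rintro rfl
      exact hab₀ (hf0.symm.trans hfn)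
    have hn1 : n ≠ 1 := by
      rintro rfl
      have := (hf 0 1 (by omega) (by omega)).2.mpr (by omega)
      rw [hf0, hfn] at this
      exact hnadj₀ this
    -- the second vertex of the path alone is an admissible set
    refine absurd ⟨{f 1}, ?_, Set.singleton_nonempty _, ?_, f 0, hfS _ (by omega), f 2,
      hfS _ (by omega), fun e => ?_, fun e => ?_, ?_, ?_⟩ hF
    · exact Set.singleton_subset_iff.mpr (hfS 1 (by omega))
    · rintro ⟨x, rfl⟩ ⟨y, rfl⟩
      exact Reachable.refl _
    · have := (hf 0 2 (by omega) (by omega)).1 e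
      omega
    · have := (hf 0 2 (by omega) (by omega)).2.mp e
      omega
    · rintro s rfl
      exact (hf _ _ (by omega) (by omega)).2.mpr (by omega)
    · rintro s rfl
      exact (hf _ _ (by omega) (by omega)).2.mpr (by omega)

/-! ### Induced paths as walks -/

lemma exists_getVert_of_mem_edges {G : SimpleGraph V} {a b : V} (p : G.Walk a b) {e : Sym2 V}
    (he : e ∈ p.edges) : ∃ k < p.length, e = s(p.getVert k, p.getVert (k + 1)) := by
  induction p with
  | nil => simp at he
  | cons h q ih =>
    rw [Walk.edges_cons, List.mem_cons] at he
    rcases he with rfl | he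
    · exact ⟨0, by simp, by simp⟩
    · obtain ⟨k, hk, rfl⟩ := ih he
      exact ⟨k + 1, by simpa using hk, by simp⟩

lemma indPath_getVert {G : SimpleGraph V} {a b : V} {p : G.Walk a b} (hp : p.IsPath)
    (hind : ∀ u w : V, u ∈ p.support → w ∈ p.support → G.Adj u w → s(u, w) ∈ p.edges) :
    IndPath G p.getVert p.length := by
  intro i j hi hj
  have inj : ∀ i j, i ≤ p.length → j ≤ p.length → p.getVert i = p.getVert j → i = j :=
    fun i j hi hj e => hp.getVert_injOn hi hj e
  refine ⟨inj i j hi hj, fun h => ?_, ?_⟩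
  · obtain ⟨k, hk, e⟩ := exists_getVert_of_mem_edges p
      (hind _ _ (p.getVert_mem_support i) (p.getVert_mem_support j) h)
    rcases Sym2.eq_iff.mp e with ⟨h1, h2⟩ | ⟨h1, h2⟩
    · have := inj _ _ hi (by omega) h1
      have := inj _ _ hj (by omega) h2
      omega
    · have := inj _ _ hi (by omega) h1
      have := inj _ _ hj (by omega) h2
      omega
  · rintro (rfl | rfl)
    · exact p.adj_getVert_succ (by omega)
    · exact (p.adj_getVert_succ (i := j) (by omega)).symm

end TwoPair

/-- Every weakly triangulated graph is either a clique or admits a 2-pair: a pair of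
distinct non-adjacent vertices `a, b` such that every induced path from `a` to `b` has
length exactly 2. -/
theorem weaklyTriangulated_clique_or_two_pair {V : Type*} [Fintype V] (G : SimpleGraph V)
    (hwt : G.IsWeaklyTriangulated) :
    (∀ u v : V, u ≠ v → G.Adj u v) ∨
      (∃ a b : V, a ≠ b ∧ ¬ G.Adj a b ∧
        ∀ p : G.Walk a b, p.IsPath →
          (∀ u w : V, u ∈ p.support → w ∈ p.support → G.Adj u w → s(u, w) ∈ p.edges) →
          p.length = 2) := by
  rw [or_iff_not_imp_left]
  intro h
  push Not at h
  obtain ⟨u, v, huv, hnadj⟩ := h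
  obtain ⟨a, -, b, -, hab, hn, hpath⟩ := TwoPair.exists_two_pair hwt _ Set.univ rfl
    ⟨u, trivial, v, trivial, huv, hnadj⟩
  exact ⟨a, b, hab, hn, fun p hp hind => hpath p.getVert p.length
    (TwoPair.indPath_getVert hp hind) (by simp) (by simp) fun _ _ => trivial⟩
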